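/- arXiv:2509.04225 — 6 statements merged into one kernel-verified Lean document; each statement's English description precedes it below -/
import Mathlib

section
/- Let (X,d) be a complete separable metric space, let p ≥ 1 and C > 0, and let μ, ν be finite Borel measures on X. Then the infimum defining the (p,C)-Kantorovich–Rubinstein distance is attained: there exists a sub-coupling π ∈ Π≤(μ,ν) such that ∫_{X×X} d(x,y)^p dπ(x,y) + C^p·((m_μ + m_ν)/2 − m_π) = KR_{p,C}(μ,ν)^p. -/
/-!
The proof is the direct method of the calculus of variations, carried out on `FiniteMeasure (X × X)`
with the topology of weak convergence. Sub-couplings are uniformly tight, because their marginals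
are dominated by the tight measures `μ` and `ν`, and have mass at most `μ X`; they also form a
weakly closed set, because domination of finite Borel measures can be tested on bounded continuous
functions (`measure_le_of_forall_lintegral_le`). Hence they form a compact set by Prokhorov's
theorem (`isCompact_setOf_isSubcoupling`). The objective is weakly lower semicontinuous
(`lowerSemicontinuous_KRcost`): its transport part is a supremum of integrals of the truncations
`min (d ^ p) n`, and its mass part is weakly continuous. So it attains its minimum. Finiteness of
the minimal value, witnessed by the zero plan, lets one pass from `ℝ≥0∞` to real numbers.
-/

open MeasureTheory ENNReal

noncomputable section

variable {X : Type*} [MetricSpace X] [MeasurableSpace X]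

/-- `π` is a sub-coupling of `(μ, ν)`: it puts at most `μ`-mass on `A × X` and
at most `ν`-mass on `X × B`, for all Borel sets `A, B`. -/
def IsSubcoupling (μ ν : Measure X) (π : Measure (X × X)) : Prop :=
  (∀ A : Set X, MeasurableSet A → π (A ×ˢ (Set.univ : Set X)) ≤ μ A) ∧
  (∀ B : Set X, MeasurableSet B → π ((Set.univ : Set X) ×ˢ B) ≤ ν B)

/-- The objective of the `(p,C)`-Kantorovich–Rubinstein problem at a plan `π`:
`∫ d(x,y)^p dπ + C^p ((m_μ + m_ν)/2 − m_π)`. -/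
def KRcost (p C : ℝ) (μ ν : Measure X) (π : Measure (X × X)) : ℝ≥0∞ :=
  (∫⁻ z, ENNReal.ofReal (dist z.1 z.2 ^ p) ∂π) +
    ENNReal.ofReal (C ^ p) * ((μ Set.univ + ν Set.univ) / 2 - π Set.univ)

/-- `KR_{p,C}(μ,ν)^p`, the infimum of the Kantorovich–Rubinstein objective over
all sub-couplings of `(μ, ν)`. -/
def KRpow (p C : ℝ) (μ ν : Measure X) : ℝ≥0∞ :=
  ⨅ (π : Measure (X × X)) (_ : IsSubcoupling μ ν π), KRcost p C μ ν π

/-- The `(p,C)`-Kantorovich–Rubinstein distance. -/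
def KR (p C : ℝ) (μ ν : Measure X) : ℝ :=
  (KRpow p C μ ν).toReal ^ (1 / p)

open Filter Topology
open scoped NNReal BoundedContinuousFunction

/-- Domination of finite Borel measures can be tested on nonnegative bounded continuous functions:
this gives the inequality on closed sets, and inner regularity extends it to Borel sets. -/
lemma measure_le_of_forall_lintegral_le {Y : Type*} [MetricSpace Y] [MeasurableSpace Y]
    [BorelSpace Y] {ρ μ : Measure Y} [IsFiniteMeasure ρ] [IsFiniteMeasure μ]
    (h : ∀ f : Y →ᵇ ℝ≥0, ∫⁻ y, f y ∂ρ ≤ ∫⁻ y, f y ∂μ) : ρ ≤ μ := by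
  refine Measure.le_iff.2 fun A hA => ?_
  rw [hA.measure_eq_iSup_isClosed_of_ne_top (measure_ne_top ρ A)]
  refine iSup_le fun F => iSup_le fun hFA => iSup_le fun hF => ?_
  refine le_trans ?_ (measure_mono hFA)
  exact le_of_tendsto_of_tendsto' (HasOuterApproxClosed.tendsto_lintegral_apprSeq hF ρ)
    (HasOuterApproxClosed.tendsto_lintegral_apprSeq hF μ) fun n => h _

lemma isSubcoupling_iff {Y : Type*} [MeasurableSpace Y] {μ ν : Measure Y}
    {π : Measure (Y × Y)} :
    IsSubcoupling μ ν π ↔ π.fst ≤ μ ∧ π.snd ≤ ν := by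
  simp only [Measure.le_iff, IsSubcoupling]
  refine and_congr (forall₂_congr fun A hA => ?_) (forall₂_congr fun B hB => ?_)
  · rw [Measure.fst_apply hA, Set.prod_univ]
  · rw [Measure.snd_apply hB, Set.univ_prod]

lemma IsSubcoupling.measure_univ_le {Y : Type*} [MeasurableSpace Y] {μ ν : Measure Y}
    {π : Measure (Y × Y)}
    (h : IsSubcoupling μ ν π) : π Set.univ ≤ μ Set.univ ∧ π Set.univ ≤ ν Set.univ := by
  have h1 := h.1 _ MeasurableSet.univ
  have h2 := h.2 _ MeasurableSet.univ
  rw [Set.univ_prod_univ] at h1 h2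
  exact ⟨h1, h2⟩

lemma isTightMeasureSet_subcouplings [CompleteSpace X] [SecondCountableTopology X]
    [BorelSpace X] (μ ν : Measure X) [IsFiniteMeasure μ] [IsFiniteMeasure ν] :
    IsTightMeasureSet {π : Measure (X × X) | IsSubcoupling μ ν π} := by
  have key : ∀ (ρ : Measure X) [IsFiniteMeasure ρ] (S : Set (Measure X)),
      (∀ σ ∈ S, σ ≤ ρ) → IsTightMeasureSet S := by
    intro ρ _ S hS
    rw [isTightMeasureSet_iff_exists_isCompact_measure_compl_le]
    intro ε hε
    obtain ⟨K, hK, hKε⟩ := isTightMeasureSet_iff_exists_isCompact_measure_compl_le.1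
      (isTightMeasureSet_singleton (μ := ρ)) ε hε
    exact ⟨K, hK, fun σ hσ => (hS σ hσ _).trans (hKε ρ rfl)⟩
  refine IsTightMeasureSet.prodMk (key μ _ ?_) (key ν _ ?_)
  · rintro _ ⟨π, hπ, rfl⟩
    exact (isSubcoupling_iff.1 hπ).1
  · rintro _ ⟨π, hπ, rfl⟩
    exact (isSubcoupling_iff.1 hπ).2

/-- The condition that the push-forward along a continuous map be dominated by a fixed finite
measure is closed under weak convergence. -/
lemma isClosed_setOf_map_le {Y Z : Type*} [TopologicalSpace Y] [MeasurableSpace Y]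
    [OpensMeasurableSpace Y] [MetricSpace Z] [MeasurableSpace Z] [BorelSpace Z]
    {g : Y → Z} (hg : Continuous g) (μ : Measure Z) [IsFiniteMeasure μ] :
    IsClosed {π : FiniteMeasure Y | (π : Measure Y).map g ≤ μ} := by
  have : {π : FiniteMeasure Y | (π : Measure Y).map g ≤ μ} =
      ⋂ f : Z →ᵇ ℝ≥0, {π : FiniteMeasure Y |
        ∫⁻ y, f (g y) ∂(π : Measure Y) ≤ ∫⁻ z, f z ∂μ} := by
    ext π
    simp only [Set.mem_iInter, Set.mem_ofPred_eq]
    have hmap (f : Z →ᵇ ℝ≥0) : ∫⁻ z, f z ∂((π : Measure Y).map g) =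
        ∫⁻ y, f (g y) ∂(π : Measure Y) :=
      lintegral_map (by fun_prop) hg.measurable
    refine ⟨fun h f => ?_, fun h => measure_le_of_forall_lintegral_le fun f => ?_⟩
    · rw [← hmap]
      exact lintegral_mono' h le_rfl
    · rw [hmap]
      exact h f
  rw [this]
  exact isClosed_iInter fun f => isClosed_le
    (FiniteMeasure.continuous_lintegral_boundedContinuousFunction
      (f.compContinuous ⟨g, hg⟩)) continuous_const

/-- Sub-couplings form a weakly compact set: they are uniformly tight with bounded mass, so Prokhorov's
theorem applies, and both marginal constraints are weakly closed. -/
lemma isCompact_setOf_isSubcoupling [CompleteSpace X] [SecondCountableTopology X]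
    [BorelSpace X] (μ ν : Measure X) [IsFiniteMeasure μ] [IsFiniteMeasure ν] :
    IsCompact {π : FiniteMeasure (X × X) | IsSubcoupling μ ν π} := by
  obtain ⟨u, -, u_pos, u_lim⟩ := exists_seq_strictAnti_tendsto (0 : ℝ≥0)
  have A n := isTightMeasureSet_iff_exists_isCompact_measure_compl_le.1
    (isTightMeasureSet_subcouplings μ ν) (u n) (by exact_mod_cast u_pos n)
  choose K hK hKu using A
  have hcomp := isCompact_setOfPred_finiteMeasure_mass_le_compl_isCompact_le
    (μ Set.univ).toNNReal u_lim hK (Or.inl inferInstance)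
  refine hcomp.of_isClosed_subset ?_ fun π hπ => ⟨?_, fun n => ?_⟩
  · simp only [isSubcoupling_iff]
    exact (isClosed_setOf_map_le continuous_fst μ).inter (isClosed_setOf_map_le continuous_snd ν)
  · rw [← ENNReal.coe_le_coe, ENNReal.coe_toNNReal (measure_ne_top _ _),
      FiniteMeasure.ennreal_mass]
    exact hπ.measure_univ_le.1
  · rw [← ENNReal.coe_le_coe, FiniteMeasure.ennreal_coeFn_eq_coeFn_toMeasure]
    exact hKu n π hπ

/-- The integral of a nonnegative continuous function, bounded or not, is weakly lower
semicontinuous: it is the supremum of the integrals of the truncations `min f n`. -/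
lemma lowerSemicontinuous_lintegral {Y : Type*} [TopologicalSpace Y] [MeasurableSpace Y]
    [OpensMeasurableSpace Y] {f : Y → ℝ≥0} (hf : Continuous f) :
    LowerSemicontinuous fun π : FiniteMeasure Y => ∫⁻ y, f y ∂(π : Measure Y) := by
  have htrunc (π : FiniteMeasure Y) : ∫⁻ y, f y ∂(π : Measure Y) =
      ⨆ n : ℕ, ∫⁻ y, (min (f y) n : ℝ≥0) ∂(π : Measure Y) := by
    rw [← lintegral_iSup]
    · refine lintegral_congr fun y => le_antisymm ?_ (iSup_le fun n => ?_)
      · obtain ⟨n, hn⟩ := exists_nat_ge (f y)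
        refine le_trans ?_ (le_iSup _ n)
        rw [min_eq_left hn]
      · exact ENNReal.coe_le_coe.2 (min_le_left _ _)
    · intro n
      exact (by fun_prop : Continuous fun y => ((min (f y) n : ℝ≥0) : ℝ≥0∞)).measurable
    · intro m n hmn y
      exact ENNReal.coe_le_coe.2 (min_le_min_left _ (by exact_mod_cast hmn))
  simp only [htrunc]
  refine lowerSemicontinuous_iSup fun n => Continuous.lowerSemicontinuous ?_
  let F : Y →ᵇ ℝ≥0 := BoundedContinuousFunction.mkOfBound
    ⟨fun y => min (f y) n, by fun_prop⟩ n fun x y => by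
      rw [NNReal.dist_eq]
      have hx : ((min (f x) n : ℝ≥0) : ℝ) ≤ n := by exact_mod_cast min_le_right _ _
      have hy : ((min (f y) n : ℝ≥0) : ℝ) ≤ n := by exact_mod_cast min_le_right _ _
      exact abs_sub_le_of_nonneg_of_le NNReal.zero_le_coe hx NNReal.zero_le_coe hy
  exact FiniteMeasure.continuous_lintegral_boundedContinuousFunction F

lemma lowerSemicontinuous_KRcost [SecondCountableTopology X] [BorelSpace X] {p : ℝ} (hp : 0 ≤ p)
    (C : ℝ) (μ ν : Measure X) [IsFiniteMeasure μ] [IsFiniteMeasure ν] :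
    LowerSemicontinuous fun π : FiniteMeasure (X × X) => KRcost p C μ ν π := by
  have hdist : Continuous fun z : X × X => (dist z.1 z.2 ^ p).toNNReal :=
    continuous_real_toNNReal.comp
      ((Real.continuous_rpow_const hp).comp continuous_dist)
  refine (lowerSemicontinuous_lintegral hdist).add (Continuous.lowerSemicontinuous ?_)
  refine (ENNReal.continuous_const_mul ENNReal.ofReal_ne_top).comp
    ((ENNReal.continuous_sub_left ?_).comp ?_)
  · exact ENNReal.div_ne_top (ENNReal.add_ne_top.2 ⟨measure_ne_top _ _, measure_ne_top _ _⟩)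
      (by norm_num)
  · simp only [← FiniteMeasure.ennreal_mass]
    exact ENNReal.continuous_coe.comp FiniteMeasure.continuous_mass

/-- The zero plan has finite cost. -/
lemma KRpow_ne_top (p C : ℝ) (μ ν : Measure X) [IsFiniteMeasure μ] [IsFiniteMeasure ν] :
    KRpow p C μ ν ≠ ∞ := by
  refine ne_top_of_le_ne_top ?_ (iInf₂_le (0 : Measure (X × X)) ⟨by simp, by simp⟩)
  simp only [KRcost, lintegral_zero_measure, zero_add, Measure.coe_zero, Pi.zero_apply, tsub_zero]
  exact ENNReal.mul_ne_top ENNReal.ofReal_ne_top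
    (ENNReal.div_ne_top (ENNReal.add_ne_top.2 ⟨measure_ne_top _ _, measure_ne_top _ _⟩)
      (by norm_num))

lemma exists_isSubcoupling_KRcost_eq [CompleteSpace X] [SecondCountableTopology X]
    [BorelSpace X] {p : ℝ} (hp : 0 ≤ p) (C : ℝ)
    (μ ν : Measure X) [IsFiniteMeasure μ] [IsFiniteMeasure ν] :
    ∃ π : Measure (X × X), IsSubcoupling μ ν π ∧ KRcost p C μ ν π = KRpow p C μ ν := by
  obtain ⟨π, hπ, hmin⟩ := LowerSemicontinuousOn.exists_isMinOn
    ⟨(0 : FiniteMeasure (X × X)), by simp [IsSubcoupling]⟩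
    (isCompact_setOf_isSubcoupling μ ν)
    ((lowerSemicontinuous_KRcost hp C μ ν).lowerSemicontinuousOn _)
  refine ⟨π, hπ, le_antisymm (le_iInf₂ fun σ hσ => ?_)
    (iInf₂_le (f := fun σ (_ : IsSubcoupling μ ν σ) => KRcost p C μ ν σ) _ hπ)⟩
  have : IsFiniteMeasure σ := ⟨hσ.measure_univ_le.1.trans_lt (measure_lt_top _ _)⟩
  exact hmin (show (⟨σ, this⟩ : FiniteMeasure (X × X)) ∈
    {π : FiniteMeasure (X × X) | IsSubcoupling μ ν π} from hσ)


/-- On a complete separable metric space, the infimum defining the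
`(p,C)`-Kantorovich–Rubinstein distance between finite Borel measures is attained
by some sub-coupling `π`. -/
theorem statement0 [CompleteSpace X] [TopologicalSpace.SeparableSpace X] [BorelSpace X]
    (p C : ℝ) (hp : 1 ≤ p) (hC : 0 < C)
    (μ ν : Measure X) [IsFiniteMeasure μ] [IsFiniteMeasure ν] :
    ∃ π : Measure (X × X), IsSubcoupling μ ν π ∧
      (∫ z, dist z.1 z.2 ^ p ∂π) +
          C ^ p * (((μ Set.univ).toReal + (ν Set.univ).toReal) / 2 - (π Set.univ).toReal) =
        KR p C μ ν ^ p := by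
  have : SecondCountableTopology X := UniformSpace.secondCountable_of_separable X
  have hp0 : 0 < p := by linarith
  obtain ⟨π, hπ, hcost⟩ := exists_isSubcoupling_KRcost_eq hp0.le C μ ν
  refine ⟨π, hπ, ?_⟩
  have hKR : KR p C μ ν ^ p = (KRpow p C μ ν).toReal := by
    rw [KR, ← Real.rpow_mul ENNReal.toReal_nonneg, one_div_mul_cancel hp0.ne', Real.rpow_one]
  have hfin : KRcost p C μ ν π ≠ ∞ := hcost ▸ KRpow_ne_top p C μ ν
  have hsum : μ Set.univ + ν Set.univ ≠ ∞ :=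
    ENNReal.add_ne_top.2 ⟨measure_ne_top _ _, measure_ne_top _ _⟩
  -- The subtraction in the mass term of `KRcost` is not truncated.
  have hmass : π Set.univ ≤ (μ Set.univ + ν Set.univ) / 2 := by
    rw [ENNReal.le_div_iff_mul_le (by norm_num) (by norm_num), mul_two]
    exact add_le_add hπ.measure_univ_le.1 hπ.measure_univ_le.2
  have hint : ∫ z, dist z.1 z.2 ^ p ∂π =
      (∫⁻ z, ENNReal.ofReal (dist z.1 z.2 ^ p) ∂π).toReal := by
    refine integral_eq_lintegral_of_nonneg_ae (ae_of_all _ fun z => by positivity) ?_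
    exact ((Real.continuous_rpow_const hp0.le).comp continuous_dist).aestronglyMeasurable
  rw [hKR, ← hcost, hint]
  rw [KRcost] at hfin ⊢
  rw [ENNReal.toReal_add (ENNReal.add_ne_top.1 hfin).1 (ENNReal.add_ne_top.1 hfin).2,
    ENNReal.toReal_mul, ENNReal.toReal_ofReal (by positivity),
    ENNReal.toReal_sub_of_le hmass (ENNReal.div_ne_top hsum (by norm_num)),
    ENNReal.toReal_div, ENNReal.toReal_add (measure_ne_top _ _) (measure_ne_top _ _),
    ENNReal.toReal_ofNat]
end
end

section
/- Let (X,d) be a complete separable metric space, let p ≥ 1 and C > 0, and let μ, ν be finite Borel measures on X. Then KR_{p,C}(μ,ν)^p = inf_{π ∈ Π≤(μ,ν)} [∫_{X×X} min(d(x,y)^p, C^p) dπ(x,y) + C^p·((m_μ + m_ν)/2 − m_π)]; that is, truncating the transport cost at C^p does not change the value of the Kantorovich–Rubinstein problem. -/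
/-!
Truncation can only lower the cost, so one inequality is immediate. Conversely, given a
sub-coupling `π`, remove the mass that it transports farther than `C`: the restriction of `π` to
`S = {d ≤ C}` is still a sub-coupling, the truncated and the full cost agree on `S`, and the
truncated cost `C ^ p · π(Sᶜ)` of the removed part is exactly the additional penalty for leaving
that mass untransported (`KRcost_restrict_le`).
-/

open MeasureTheory ENNReal

noncomputable section

variable {X : Type*} [MetricSpace X] [MeasurableSpace X]

set_option linter.unusedSectionVars false in
lemma IsSubcoupling.restrict {μ ν : Measure X} {π : Measure (X × X)} (h : IsSubcoupling μ ν π)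
    (S : Set (X × X)) : IsSubcoupling μ ν (π.restrict S) :=
  ⟨fun A hA => (Measure.restrict_apply_le _ _).trans (h.1 A hA),
    fun B hB => (Measure.restrict_apply_le _ _).trans (h.2 B hB)⟩

/-- Restricting a plan to the pairs at distance at most `C` makes its full cost at most the
truncated cost of the original plan. -/
lemma KRcost_restrict_le [TopologicalSpace.SeparableSpace X] [BorelSpace X]
    {p C : ℝ} (hp : 0 ≤ p) (hC : 0 ≤ C) (μ ν : Measure X) (π : Measure (X × X)) :
    KRcost p C μ ν (π.restrict {z | dist z.1 z.2 ≤ C}) ≤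
      (∫⁻ z, ENNReal.ofReal (min (dist z.1 z.2 ^ p) (C ^ p)) ∂π) +
        ENNReal.ofReal (C ^ p) * ((μ Set.univ + ν Set.univ) / 2 - π Set.univ) := by
  have : SecondCountableTopology X := UniformSpace.secondCountable_of_separable X
  set S : Set (X × X) := {z | dist z.1 z.2 ≤ C}
  have hSm : MeasurableSet S := measurableSet_le (by fun_prop) measurable_const
  set M := (μ Set.univ + ν Set.univ) / 2
  have hin : ∫⁻ z in S, ENNReal.ofReal (min (dist z.1 z.2 ^ p) (C ^ p)) ∂π
      = ∫⁻ z in S, ENNReal.ofReal (dist z.1 z.2 ^ p) ∂π :=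
    setLIntegral_congr_fun hSm fun z hz => by
      rw [min_eq_left (Real.rpow_le_rpow dist_nonneg hz hp)]
  have hout : ∫⁻ z in Sᶜ, ENNReal.ofReal (min (dist z.1 z.2 ^ p) (C ^ p)) ∂π
      = ENNReal.ofReal (C ^ p) * π Sᶜ := by
    rw [← setLIntegral_const]
    refine setLIntegral_congr_fun hSm.compl fun z hz => ?_
    have hz' : C ≤ dist z.1 z.2 := (lt_of_not_ge (show ¬ dist z.1 z.2 ≤ C from hz)).le
    rw [min_eq_right (Real.rpow_le_rpow hC hz' hp)]
  have hmass : M - π S ≤ π Sᶜ + (M - π Set.univ) := by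
    rw [tsub_le_iff_right]
    calc M ≤ (M - π Set.univ) + π Set.univ := le_tsub_add
      _ = π Sᶜ + (M - π Set.univ) + π S := by
        rw [← measure_add_measure_compl hSm]; ring
  rw [← lintegral_add_compl _ hSm, hin, hout, add_assoc, ← mul_add]
  unfold KRcost
  rw [Measure.restrict_apply_univ]
  gcongr

/-- Truncating the transport cost at `C^p` does not change the value of
the `(p,C)`-Kantorovich–Rubinstein problem. -/
theorem statement1 [CompleteSpace X] [TopologicalSpace.SeparableSpace X] [BorelSpace X]
    (p C : ℝ) (hp : 1 ≤ p) (hC : 0 < C)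
    (μ ν : Measure X) [IsFiniteMeasure μ] [IsFiniteMeasure ν] :
    KR p C μ ν ^ p =
      (⨅ (π : Measure (X × X)) (_ : IsSubcoupling μ ν π),
        ((∫⁻ z, ENNReal.ofReal (min (dist z.1 z.2 ^ p) (C ^ p)) ∂π) +
          ENNReal.ofReal (C ^ p) * ((μ Set.univ + ν Set.univ) / 2 - π Set.univ))).toReal := by
  have hp0 : 0 < p := one_pos.trans_le hp
  rw [KR, ← Real.rpow_mul ENNReal.toReal_nonneg, one_div_mul_cancel hp0.ne', Real.rpow_one]
  congr 1
  apply le_antisymm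
  · exact le_iInf₂ fun π hπ => (iInf₂_le _ (hπ.restrict _)).trans
      (KRcost_restrict_le hp0.le hC.le μ ν π)
  · refine iInf₂_mono fun π _ => ?_
    unfold KRcost
    gcongr
    exact min_le_left _ _
end
end

section
/- Let (X,d) be a complete separable metric space, let p ≥ 1 and C > 0, let μ, ν be finite Borel measures on X, and let K ≥ max(m_μ, m_ν). Then KR_{p,C}(μ,ν)^p = OT_{d̃^p}(μ̃_K, ν̃_K), the balanced optimal transport cost between the augmented measures μ̃_K and ν̃_K on the augmented space X̃ with cost function d̃_{p,C}(x,y)^p; in particular the right-hand side does not depend on the choice of K ≥ max(m_μ, m_ν). -/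
/-!
Put weight `C^p / 2` on each point of `X` and weight `0` on the cemetery point `𝔡`. The cost
`d̃^p` is at most the sum of the weights of its two arguments, with equality unless both arguments
lie in `X` at distance less than `C` (`cost_le_weight`, `cost_eq_weight`). The total weight of a
coupling of `μ̃_K` and `ν̃_K` is `C^p (m_μ + m_ν) / 2`, whatever the coupling and whatever `K`.

* `OT ≤ KR^p` (`OTlift_le_KRcost`): given a sub-coupling `π`, the leftover mass of `μ̃_K` and of
  `ν̃_K` after removing the marginals of `π` has the same total `K - m_π` on both sides. Coupling the
  leftovers by their normalized product costs at most their total weight, which is the penalty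
  `C^p ((m_μ + m_ν) / 2 - m_π)`. Sending the leftovers to `𝔡` would not work in general, because
  `K` may be smaller than `m_μ + m_ν - m_π`.
* `KR^p ≤ OT` (`KRpow_le_lintegral`): given a coupling of the augmented measures, keep only its part
  on pairs of points of `X` at distance less than `C`. On the discarded part the cost equals the
  weight, and the weight of the discarded part is exactly the penalty.
-/

open MeasureTheory ENNReal

noncomputable section

variable {X : Type*} [MetricSpace X] [MeasurableSpace X]

/-- The augmented space `X̃ = X ∪ {𝔡}`, realized as `X ⊕ Unit` with `𝔡 = Sum.inr ()`. -/
abbrev Aug (X : Type*) := X ⊕ Unit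

/-- The metric `d̃_{p,C}` on the augmented space. -/
def dTilde (p C : ℝ) : Aug X → Aug X → ℝ
  | Sum.inl x, Sum.inl y => min (dist x y) C
  | Sum.inl _, Sum.inr _ => C * 2 ^ (-(1 / p))
  | Sum.inr _, Sum.inl _ => C * 2 ^ (-(1 / p))
  | Sum.inr _, Sum.inr _ => 0

/-- The augmented measure `μ̃_K = μ + (K − m_μ)·δ_𝔡` on `X̃`. -/
def augment (μ : Measure X) (K : ℝ≥0∞) : Measure (Aug X) :=
  Measure.map Sum.inl μ + (K - μ Set.univ) • Measure.dirac (Sum.inr () : Aug X)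

/-- The balanced optimal transport cost on the augmented space for the cost
function `d̃_{p,C}^p`: the infimum over all couplings of `(ρ, σ)` (measures on
`X̃ × X̃` with first marginal `ρ` and second marginal `σ`). -/
def OTlift (p C : ℝ) (ρ σ : Measure (Aug X)) : ℝ≥0∞ :=
  ⨅ (π : Measure (Aug X × Aug X))
    (_ : π.map Prod.fst = ρ ∧ π.map Prod.snd = σ),
    ∫⁻ z, ENNReal.ofReal (dTilde p C z.1 z.2 ^ p) ∂π

/-- The weight `C^p / 2` on points of `X`, and `0` at `𝔡`. -/
def weight (p C : ℝ) : Aug X → ℝ≥0∞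
  | Sum.inl _ => ENNReal.ofReal (C ^ p) / 2
  | Sum.inr _ => 0

omit [MetricSpace X] in
lemma measurable_weight (p C : ℝ) : Measurable (weight p C : Aug X → ℝ≥0∞) :=
  measurable_fun_sum measurable_const measurable_const

lemma measurableEmbedding_inl {Y Z : Type*} [MeasurableSpace Y] [MeasurableSpace Z] :
    MeasurableEmbedding (Sum.inl : Y → Y ⊕ Z) where
  injective := Sum.inl_injective
  measurable := measurable_inl
  measurableSet_image' _ hs := measurableSet_inl_image.2 hs

lemma ofReal_half_rpow {p C : ℝ} (hp : 1 ≤ p) (hC : 0 < C) :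
    ENNReal.ofReal ((C * 2 ^ (-(1 / p))) ^ p) = ENNReal.ofReal (C ^ p) / 2 := by
  have hp0 : p ≠ 0 := by positivity
  have h : (C * 2 ^ (-(1 / p))) ^ p = C ^ p / 2 := by
    rw [Real.mul_rpow hC.le (by positivity), ← Real.rpow_mul (by norm_num)]
    have : -(1 / p) * p = -1 := by field_simp
    rw [this, Real.rpow_neg_one]
    rfl
  rw [h, ENNReal.ofReal_div_of_pos (by norm_num)]
  norm_num

omit [MeasurableSpace X] in
lemma cost_le_weight {p C : ℝ} (hp : 1 ≤ p) (hC : 0 < C) (z : Aug X × Aug X) :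
    ENNReal.ofReal (dTilde p C z.1 z.2 ^ p) ≤ weight p C z.1 + weight p C z.2 := by
  obtain ⟨x | x, y | y⟩ := z
  · simp only [dTilde, weight, ENNReal.add_halves]
    exact ENNReal.ofReal_le_ofReal (Real.rpow_le_rpow (le_min dist_nonneg hC.le)
      (min_le_right _ _) (by positivity))
  · simp only [dTilde, weight, add_zero, ofReal_half_rpow hp hC, le_refl]
  · simp only [dTilde, weight, zero_add, ofReal_half_rpow hp hC, le_refl]
  · simp [dTilde, weight, Real.zero_rpow (by positivity : p ≠ 0)]

/-- The pairs of points of `X` at distance less than `C`. -/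
def closePairs (X : Type*) [MetricSpace X] (C : ℝ) : Set (X × X) := {z | dist z.1 z.2 < C}

omit [MeasurableSpace X] in
lemma cost_eq_weight {p C : ℝ} (hp : 1 ≤ p) (hC : 0 < C) (z : Aug X × Aug X)
    (hz : z ∉ Prod.map Sum.inl Sum.inl '' closePairs X C) :
    ENNReal.ofReal (dTilde p C z.1 z.2 ^ p) = weight p C z.1 + weight p C z.2 := by
  obtain ⟨x | x, y | y⟩ := z
  · have hd : C ≤ dist x y := by
      by_contra! h
      exact hz ⟨(x, y), h, rfl⟩
    simp only [dTilde, weight, ENNReal.add_halves, min_eq_right hd]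
  · simp only [dTilde, weight, add_zero, ofReal_half_rpow hp hC]
  · simp only [dTilde, weight, zero_add, ofReal_half_rpow hp hC]
  · simp [dTilde, weight, Real.zero_rpow (by positivity : p ≠ 0)]

omit [MetricSpace X] in
lemma lintegral_weight_augment (p C : ℝ) (μ : Measure X) (K : ℝ≥0∞) :
    ∫⁻ z, weight p C z ∂(augment μ K) = ENNReal.ofReal (C ^ p) / 2 * μ Set.univ := by
  rw [augment, lintegral_add_measure, lintegral_smul_measure,
    lintegral_dirac' _ (measurable_weight p C),
    lintegral_map (measurable_weight p C) measurable_inl]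
  simp [weight]

omit [MetricSpace X] in
lemma augment_univ (μ : Measure X) {K : ℝ≥0∞} (hK : μ Set.univ ≤ K) :
    augment μ K Set.univ = K := by
  simp [augment, Measure.map_apply measurable_inl MeasurableSet.univ, add_tsub_cancel_of_le hK]

omit [MetricSpace X] in
lemma augment_image_inl (μ : Measure X) (K : ℝ≥0∞) {A : Set X} (hA : MeasurableSet A) :
    augment μ K (Sum.inl '' A) = μ A := by
  have hm : MeasurableSet (Sum.inl '' A : Set (Aug X)) :=
    measurableSet_inl_image.2 hA
  simp [augment, Measure.map_apply measurable_inl hm, Measure.dirac_apply' _ hm,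
    Set.preimage_image_eq _ Sum.inl_injective]

omit [MetricSpace X] in
/-- Removing a part `α` of `μ` from `μ̃_K` leaves the augmentation of `μ - α` to mass `K - m_α`. -/
lemma augment_split {μ α : Measure X} [IsFiniteMeasure α] (h : α ≤ μ) (K : ℝ≥0∞) :
    augment μ K = α.map Sum.inl + augment (μ - α) (K - α Set.univ) := by
  have hμ : α + (μ - α) = μ := by rw [add_comm, Measure.sub_add_cancel_of_le h]
  have hu : α Set.univ + (μ - α) Set.univ = μ Set.univ := by
    rw [← Measure.add_apply, hμ]
  rw [augment, augment, tsub_tsub, hu, ← add_assoc, ← Measure.map_add _ _ measurable_inl, hμ]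

/-- Two finite measures of equal total mass have a coupling, their normalized product. -/
lemma exists_coupling {Y : Type*} [MeasurableSpace Y] (ρ σ : Measure Y) {k : ℝ≥0∞} (hk : k ≠ ⊤)
    (hρ : ρ Set.univ = k) (hσ : σ Set.univ = k) :
    ∃ η : Measure (Y × Y), η.map Prod.fst = ρ ∧ η.map Prod.snd = σ := by
  have : IsFiniteMeasure ρ := ⟨by rw [hρ]; exact hk.lt_top⟩
  have : IsFiniteMeasure σ := ⟨by rw [hσ]; exact hk.lt_top⟩
  rcases eq_or_ne k 0 with rfl | h0
  · rw [Measure.measure_univ_eq_zero] at hρ hσ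
    exact ⟨0, by simp [hρ], by simp [hσ]⟩
  · refine ⟨k⁻¹ • ρ.prod σ, ?_, ?_⟩
    · rw [Measure.map_smul, Measure.map_fst_prod, hσ, smul_smul, ENNReal.inv_mul_cancel h0 hk,
        one_smul]
    · rw [Measure.map_smul, Measure.map_snd_prod, hρ, smul_smul, ENNReal.inv_mul_cancel h0 hk,
        one_smul]

omit [MetricSpace X] in
/-- The total weight of a coupling depends only on the mass of its marginals inside `X`. -/
lemma lintegral_weight_coupling (p C : ℝ) {μ ν : Measure X} {K L : ℝ≥0∞}
    {η : Measure (Aug X × Aug X)}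
    (h1 : η.map Prod.fst = augment μ K) (h2 : η.map Prod.snd = augment ν L) :
    ∫⁻ z, (weight p C z.1 + weight p C z.2) ∂η
      = ENNReal.ofReal (C ^ p) * ((μ Set.univ + ν Set.univ) / 2) := by
  rw [lintegral_add_left (f := fun z : Aug X × Aug X => weight p C z.1)
      ((measurable_weight p C).comp measurable_fst),
    ← lintegral_map (measurable_weight p C) measurable_fst,
    ← lintegral_map (measurable_weight p C) measurable_snd, h1, h2,
    lintegral_weight_augment, lintegral_weight_augment]
  simp only [div_eq_mul_inv]
  ring

lemma OTlift_le_KRcost {p C : ℝ} (hp : 1 ≤ p) (hC : 0 < C)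
    (μ ν : Measure X) [IsFiniteMeasure μ] [IsFiniteMeasure ν]
    {K : ℝ≥0∞} (hKtop : K ≠ ⊤) (hKμ : μ Set.univ ≤ K) (hKν : ν Set.univ ≤ K)
    {π : Measure (X × X)} (hπ : IsSubcoupling μ ν π) :
    OTlift p C (augment μ K) (augment ν K) ≤ KRcost p C μ ν π := by
  have h1 : π.map Prod.fst ≤ μ := Measure.le_iff.2 fun A hA => by
    rw [Measure.map_apply measurable_fst hA, ← Set.prod_univ]
    exact hπ.1 A hA
  have h2 : π.map Prod.snd ≤ ν := Measure.le_iff.2 fun A hA => by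
    rw [Measure.map_apply measurable_snd hA, ← Set.univ_prod]
    exact hπ.2 A hA
  have u1 : π.map Prod.fst Set.univ = π Set.univ := by
    rw [Measure.map_apply measurable_fst MeasurableSet.univ, Set.preimage_univ]
  have u2 : π.map Prod.snd Set.univ = π Set.univ := by
    rw [Measure.map_apply measurable_snd MeasurableSet.univ, Set.preimage_univ]
  have : IsFiniteMeasure (π.map Prod.fst) := isFiniteMeasure_of_le μ h1
  have : IsFiniteMeasure (π.map Prod.snd) := isFiniteMeasure_of_le ν h2
  have hπtop : π Set.univ ≠ ⊤ := by rw [← u1]; exact measure_ne_top _ _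
  have m1 : (μ - π.map Prod.fst) Set.univ = μ Set.univ - π Set.univ := by
    rw [Measure.sub_apply MeasurableSet.univ h1, u1]
  have m2 : (ν - π.map Prod.snd) Set.univ = ν Set.univ - π Set.univ := by
    rw [Measure.sub_apply MeasurableSet.univ h2, u2]
  have s1 := augment_split h1 K
  have s2 := augment_split h2 K
  rw [u1] at s1
  rw [u2] at s2
  obtain ⟨η, η1, η2⟩ := exists_coupling
    (augment (μ - π.map Prod.fst) (K - π Set.univ))
    (augment (ν - π.map Prod.snd) (K - π Set.univ))
    (k := K - π Set.univ) (ENNReal.sub_ne_top hKtop)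
    (augment_univ _ (by rw [m1]; gcongr)) (augment_univ _ (by rw [m2]; gcongr))
  have hE : MeasurableEmbedding (Prod.map Sum.inl Sum.inl : X × X → Aug X × Aug X) :=
    measurableEmbedding_inl.prodMap measurableEmbedding_inl
  have hcpl : (π.map (Prod.map Sum.inl Sum.inl) + η).map Prod.fst = augment μ K ∧
      (π.map (Prod.map Sum.inl Sum.inl) + η).map Prod.snd = augment ν K := by
    constructor
    · rw [Measure.map_add _ _ measurable_fst, η1, s1, Measure.map_map measurable_fst hE.measurable,
        Measure.map_map measurable_inl measurable_fst]
      rfl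
    · rw [Measure.map_add _ _ measurable_snd, η2, s2, Measure.map_map measurable_snd hE.measurable,
        Measure.map_map measurable_inl measurable_snd]
      rfl
  refine iInf₂_le_of_le _ hcpl ?_
  rw [lintegral_add_measure, hE.lintegral_map, KRcost]
  refine add_le_add (lintegral_mono fun z => ?_) ?_
  · exact ENNReal.ofReal_le_ofReal (Real.rpow_le_rpow (le_min dist_nonneg hC.le)
      (min_le_left _ _) (by positivity))
  · refine (lintegral_mono (cost_le_weight hp hC)).trans_eq ?_
    rw [lintegral_weight_coupling p C η1 η2, m1, m2]
    congr 1
    have l1 : π Set.univ ≤ μ Set.univ := u1 ▸ h1 Set.univ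
    have l2 : π Set.univ ≤ ν Set.univ := u2 ▸ h2 Set.univ
    refine ENNReal.eq_sub_of_add_eq hπtop ?_
    nth_rw 3 [← ENNReal.add_halves (π Set.univ)]
    rw [← ENNReal.add_div, ← ENNReal.add_div, add_add_add_comm, tsub_add_cancel_of_le l1,
      tsub_add_cancel_of_le l2]

lemma KRpow_le_lintegral [TopologicalSpace.SeparableSpace X] [BorelSpace X]
    {p C : ℝ} (hp : 1 ≤ p) (hC : 0 < C)
    (μ ν : Measure X) [IsFiniteMeasure μ] [IsFiniteMeasure ν] {K : ℝ≥0∞}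
    {η : Measure (Aug X × Aug X)}
    (h1 : η.map Prod.fst = augment μ K) (h2 : η.map Prod.snd = augment ν K) :
    KRpow p C μ ν ≤ ∫⁻ z, ENNReal.ofReal (dTilde p C z.1 z.2 ^ p) ∂η := by
  have : SecondCountableTopology X := UniformSpace.secondCountable_of_separable X
  have hE : MeasurableEmbedding (Prod.map Sum.inl Sum.inl : X × X → Aug X × Aug X) :=
    measurableEmbedding_inl.prodMap measurableEmbedding_inl
  set E : X × X → Aug X × Aug X := Prod.map Sum.inl Sum.inl with hEdef
  have hT : MeasurableSet (closePairs X C) := measurableSet_lt measurable_dist measurable_const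
  set S := E '' closePairs X C with hSdef
  have hS : MeasurableSet S := hE.measurableSet_image.2 hT
  set π : Measure (X × X) := (η.comap E).restrict (closePairs X C) with hπdef
  -- The mass of `π` is that of `η` on `S`, and integrals over `S` can be pulled back to `π`.
  have hmap : π.map E = η.restrict S := by
    have hST : E ⁻¹' S = closePairs X C := Set.preimage_image_eq _ hE.injective
    rw [hπdef, ← hST, ← hE.restrict_map, hE.map_comap, Measure.restrict_restrict hS,
      Set.inter_eq_left.2 (Set.image_subset_range _ _)]
  have hle : ∀ B, π B ≤ η (E '' B) := fun B => by
    rw [← hE.comap_apply]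
    exact Measure.restrict_le_self B
  have hsub : IsSubcoupling μ ν π := by
    refine ⟨fun A hA => ?_, fun B hB => ?_⟩
    · rw [← augment_image_inl μ K hA, ← h1,
        Measure.map_apply measurable_fst (measurableSet_inl_image.2 hA)]
      refine (hle _).trans (measure_mono ?_)
      rintro _ ⟨⟨x, y⟩, hxy, rfl⟩
      exact ⟨x, hxy.1, rfl⟩
    · rw [← augment_image_inl ν K hB, ← h2,
        Measure.map_apply measurable_snd (measurableSet_inl_image.2 hB)]
      refine (hle _).trans (measure_mono ?_)
      rintro _ ⟨⟨x, y⟩, hxy, rfl⟩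
      exact ⟨y, hxy.2, rfl⟩
  have hπtop : π Set.univ ≠ ⊤ := by
    have := hsub.1 Set.univ MeasurableSet.univ
    rw [Set.univ_prod_univ] at this
    exact ne_top_of_le_ne_top (measure_ne_top μ _) this
  have hin : ∫⁻ z in S, ENNReal.ofReal (dTilde p C z.1 z.2 ^ p) ∂η
      = ∫⁻ z, ENNReal.ofReal (dist z.1 z.2 ^ p) ∂π := by
    rw [← hmap, hE.lintegral_map]
    refine setLIntegral_congr_fun hT fun z hz => ?_
    have hz' : dist z.1 z.2 ≤ C := le_of_lt hz
    simp [hEdef, dTilde, min_eq_left hz']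
  have hout : ∫⁻ z in Sᶜ, ENNReal.ofReal (dTilde p C z.1 z.2 ^ p) ∂η
      = ∫⁻ z in Sᶜ, (weight p C z.1 + weight p C z.2) ∂η :=
    setLIntegral_congr_fun hS.compl fun z hz => cost_eq_weight hp hC z hz
  have hwin : ∫⁻ z in S, (weight p C z.1 + weight p C z.2) ∂η
      = ENNReal.ofReal (C ^ p) * π Set.univ := by
    rw [← hmap, hE.lintegral_map]
    simp only [hEdef, Prod.map_fst, Prod.map_snd, weight, ENNReal.add_halves, lintegral_const]
  have hpen : ENNReal.ofReal (C ^ p) * ((μ Set.univ + ν Set.univ) / 2 - π Set.univ)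
      = ∫⁻ z in Sᶜ, (weight p C z.1 + weight p C z.2) ∂η := by
    rw [ENNReal.mul_sub fun _ _ => ENNReal.ofReal_ne_top,
      ← lintegral_weight_coupling p C h1 h2, ← lintegral_add_compl _ hS, hwin]
    exact ENNReal.add_sub_cancel_left (ENNReal.mul_ne_top ENNReal.ofReal_ne_top hπtop)
  refine (iInf₂_le π hsub).trans_eq ?_
  rw [KRcost, hpen, ← hin, ← hout, lintegral_add_compl _ hS]

/-- The `(p,C)`-Kantorovich–Rubinstein distance coincides with the
balanced optimal transport cost between the augmented measures `μ̃_K, ν̃_K`, for every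
`K ≥ max(m_μ, m_ν)`; in particular the right-hand side does not depend on `K`. -/
theorem statement3 [CompleteSpace X] [TopologicalSpace.SeparableSpace X] [BorelSpace X]
    (p C : ℝ) (hp : 1 ≤ p) (hC : 0 < C)
    (μ ν : Measure X) [IsFiniteMeasure μ] [IsFiniteMeasure ν]
    (K : ℝ≥0∞) (hKtop : K ≠ ⊤) (hKμ : μ Set.univ ≤ K) (hKν : ν Set.univ ≤ K) :
    KR p C μ ν ^ p = (OTlift p C (augment μ K) (augment ν K)).toReal := by
  have h : KRpow p C μ ν = OTlift p C (augment μ K) (augment ν K) :=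
    le_antisymm (le_iInf₂ fun η hη => KRpow_le_lintegral hp hC μ ν hη.1 hη.2)
      (le_iInf₂ fun π hπ => OTlift_le_KRcost hp hC μ ν hKtop hKμ hKν hπ)
  rw [KR, ← Real.rpow_mul ENNReal.toReal_nonneg, one_div_mul_cancel (by positivity),
    Real.rpow_one, h]
end
end

section
/- Let (X,d) be a complete separable metric space, let p ≥ 1, and let μ, ν be finite Borel measures on X. Suppose 0 < C ≤ d(x₁,x₂) for every x₁ ∈ supp(μ) and every x₂ ∈ supp(ν) with x₂ ≠ x₁ (i.e., C is at most the distance between any pair of distinct points of supp(μ) and supp(ν)). Then KR_{p,C}(μ,ν)^p = (C^p/2)·‖μ − ν‖_TV, where ‖μ − ν‖_TV = |μ − ν|(X) denotes the total variation norm of the signed measure μ − ν. -/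
/-!
Let `S` be a Hahn set for `(μ, ν)`: `μ ≤ ν` on `S` and `ν ≤ μ` on `Sᶜ`. The common part
`μ ∧ ν = μ|_S + ν|_{Sᶜ}` has mass `m = μ S + ν Sᶜ`, and the infimum of the transport problem is
`C^p ((m_μ + m_ν)/2 - m)`, attained by the plan that leaves `μ ∧ ν` in place.

* Upper bound (`exists_subcoupling_KRcost_le`): the image of `μ ∧ ν` under `x ↦ (x, x)` is a
  sub-coupling whose transport cost vanishes.
* Lower bound (`le_KRcost_of_isSubcoupling`): a sub-coupling `π` is concentrated on
  `supp μ × supp ν`, so its off-diagonal part pays at least `C^p` per unit of mass, which is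
  exactly the price of not transporting that mass. The cost of `π` is therefore at least
  `C^p ((m_μ + m_ν)/2 - π(diagonal))`. Since the diagonal is covered by `S × X` and `X × Sᶜ`,
  the sub-coupling inequalities give `π(diagonal) ≤ m`.

Finally `m_μ + m_ν - 2 m = (μ Sᶜ - ν Sᶜ) + (ν S - μ S)` is the total variation of `μ - ν`, whose
Jordan decomposition is the pair of truncated differences `(μ - ν, ν - μ)`.
-/

open MeasureTheory ENNReal

noncomputable section

variable {X : Type*} [MetricSpace X] [MeasurableSpace X]

/-- The topological support of a Borel measure on a metric space: the set of points
all of whose neighborhoods have positive measure. -/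
def msupport (μ : Measure X) : Set X :=
  {x : X | ∀ ε : ℝ, 0 < ε → 0 < μ (Metric.ball x ε)}

theorem msupport_eq_support (μ : Measure X) : msupport μ = μ.support := by
  ext x
  exact (Metric.nhds_basis_ball.mem_measureSupport).symm

theorem IsSubcoupling.ae_mem_msupport [SecondCountableTopology X]
    {μ ν : Measure X} {π : Measure (X × X)} (h : IsSubcoupling μ ν π)
    [OpensMeasurableSpace X] :
    ∀ᵐ z ∂π, z.1 ∈ msupport μ ∧ z.2 ∈ msupport ν := by
  rw [msupport_eq_support, msupport_eq_support, Filter.eventually_and]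
  constructor
  · have h1 := h.1 _ (Measure.isOpen_compl_support (μ := μ)).measurableSet
    rw [Measure.measure_compl_support, nonpos_iff_eq_zero] at h1
    refine measure_mono_null ?_ h1
    exact fun z hz => ⟨hz, trivial⟩
  · have h2 := h.2 _ (Measure.isOpen_compl_support (μ := ν)).measurableSet
    rw [Measure.measure_compl_support, nonpos_iff_eq_zero] at h2
    refine measure_mono_null ?_ h2
    exact fun z hz => ⟨trivial, hz⟩

/-- The diagonal is covered by `S ×ˢ univ` and `univ ×ˢ Sᶜ`. When `S` is a Hahn set for `(μ, ν)`
the right-hand side is the mass of `μ ∧ ν`, so the bound is then the best one. -/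
theorem IsSubcoupling.diagonal_le {Y : Type*} [MeasurableSpace Y]
    {μ ν : Measure Y} {π : Measure (Y × Y)}
    (h : IsSubcoupling μ ν π) {S : Set Y} (hS : MeasurableSet S) :
    π (Set.diagonal Y) ≤ μ S + ν Sᶜ := by
  have hsub : Set.diagonal Y ⊆ S ×ˢ Set.univ ∪ Set.univ ×ˢ Sᶜ := by
    rintro ⟨x, y⟩ hxy
    obtain rfl : x = y := hxy
    by_cases hx : x ∈ S <;> simp [hx]
  exact (measure_mono hsub).trans <| (measure_union_le _ _).trans <|
    add_le_add (h.1 S hS) (h.2 _ hS.compl)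

/-- Off the diagonal `π` pays at least `C ^ p` per unit of mass, so its cost is no less than if
that mass were left untransported. -/
theorem le_KRcost_of_isSubcoupling [SecondCountableTopology X] [BorelSpace X]
    {p C : ℝ} (hp : 1 ≤ p) (hC : 0 < C) {μ ν : Measure X}
    (hsep : ∀ x₁ ∈ msupport μ, ∀ x₂ ∈ msupport ν, x₂ ≠ x₁ → C ≤ dist x₁ x₂)
    {π : Measure (X × X)} (h : IsSubcoupling μ ν π) {S : Set X} (hS : MeasurableSet S) :
    ENNReal.ofReal (C ^ p) * ((μ Set.univ + ν Set.univ) / 2 - (μ S + ν Sᶜ))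
      ≤ KRcost p C μ ν π := by
  have hD : MeasurableSet (Set.diagonal X) := measurableSet_diagonal
  have hoff : ENNReal.ofReal (C ^ p) * π (Set.diagonal X)ᶜ
      ≤ ∫⁻ z, ENNReal.ofReal (dist z.1 z.2 ^ p) ∂π := by
    rw [← lintegral_indicator_const hD.compl]
    refine lintegral_mono_ae ?_
    filter_upwards [h.ae_mem_msupport] with z hz
    by_cases hzD : z ∈ (Set.diagonal X)ᶜ
    · rw [Set.indicator_of_mem hzD]
      have hne : z.2 ≠ z.1 := fun e => hzD e.symm
      exact ENNReal.ofReal_le_ofReal <|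
        Real.rpow_le_rpow hC.le (hsep _ hz.1 _ hz.2 hne) (by linarith)
    · simp [Set.indicator_of_notMem hzD]
  calc ENNReal.ofReal (C ^ p) * ((μ Set.univ + ν Set.univ) / 2 - (μ S + ν Sᶜ))
      ≤ ENNReal.ofReal (C ^ p) *
          (π (Set.diagonal X)ᶜ + ((μ Set.univ + ν Set.univ) / 2 - π Set.univ)) := by
        gcongr
        refine (tsub_le_tsub_left (h.diagonal_le hS) _).trans ?_
        rw [← measure_add_measure_compl hD, tsub_le_iff_left, ← add_assoc]
        exact le_add_tsub
    _ ≤ KRcost p C μ ν π := by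
        rw [mul_add]
        exact add_le_add_left hoff _

/-- The plan that leaves the common part `μ|_S + ν|_{Sᶜ}` in place. -/
theorem exists_subcoupling_KRcost_le [SecondCountableTopology X] [BorelSpace X]
    {p C : ℝ} (hp : 1 ≤ p) {μ ν : Measure X} {S : Set X}
    (hS : IsHahnDecomposition μ ν S) :
    ∃ π, IsSubcoupling μ ν π ∧ KRcost p C μ ν π ≤
      ENNReal.ofReal (C ^ p) * ((μ Set.univ + ν Set.univ) / 2 - (μ S + ν Sᶜ)) := by
  set ρ : Measure X := μ.restrict S + ν.restrict Sᶜ with hρ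
  have hm : Measurable fun x : X => (x, x) := measurable_id.prodMk measurable_id
  have hρμ : ρ ≤ μ := by
    calc ρ ≤ μ.restrict S + μ.restrict Sᶜ := add_le_add_right hS.ge_on_compl _
      _ = μ := Measure.restrict_add_restrict_compl hS.measurableSet
  have hρν : ρ ≤ ν := by
    calc ρ ≤ ν.restrict S + ν.restrict Sᶜ := add_le_add_left hS.le_on _
      _ = ν := Measure.restrict_add_restrict_compl hS.measurableSet
  refine ⟨ρ.map fun x => (x, x), ⟨fun A hA => ?_, fun B hB => ?_⟩, ?_⟩
  · rw [Measure.map_apply hm (hA.prod .univ)]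
    simpa [Set.preimage] using hρμ A
  · rw [Measure.map_apply hm (MeasurableSet.univ.prod hB)]
    simpa [Set.preimage] using hρν B
  · have hp0 : p ≠ 0 := by linarith
    have h0 : ∫⁻ z, ENNReal.ofReal (dist z.1 z.2 ^ p) ∂(ρ.map fun x => (x, x)) = 0 := by
      refine le_antisymm ((lintegral_map_le _ _).trans ?_) zero_le
      simp [hp0]
    have hmass : (ρ.map fun x => (x, x)) Set.univ = μ S + ν Sᶜ := by
      rw [Measure.map_apply hm .univ]
      simp [hρ]
    rw [KRcost, h0, hmass, zero_add]

theorem sub_univ_eq {Y : Type*} [MeasurableSpace Y]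
    {μ ν : Measure Y} [IsFiniteMeasure μ] [IsFiniteMeasure ν] {S : Set Y}
    (hS : IsHahnDecomposition μ ν S) : (μ - ν) Set.univ = μ Sᶜ - ν Sᶜ := by
  rw [← measure_add_measure_compl hS.measurableSet,
    Measure.sub_apply_eq_zero_of_isHahnDecomposition hS, zero_add,
    ← Measure.restrict_apply_univ Sᶜ,
    Measure.restrict_sub_eq_restrict_sub_restrict hS.measurableSet.compl,
    Measure.sub_apply .univ hS.ge_on_compl]
  simp

theorem totalVariation_sub_toReal {Y : Type*} [MeasurableSpace Y]
    {μ ν : Measure Y} [IsFiniteMeasure μ] [IsFiniteMeasure ν]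
    {S : Set Y} (hS : IsHahnDecomposition μ ν S) :
    ((μ.toSignedMeasure - ν.toSignedMeasure).totalVariation Set.univ).toReal =
      (μ.real Sᶜ - ν.real Sᶜ) + (ν.real S - μ.real S) := by
  have h1 : μ S ≤ ν S := by simpa using hS.le_on Set.univ
  have h2 : ν Sᶜ ≤ μ Sᶜ := by simpa using hS.ge_on_compl Set.univ
  rw [SignedMeasure.totalVariation, Measure.toJordanDecomposition_toSignedMeasure_sub,
    Measure.jordanDecompositionOfToSignedMeasureSub_posPart,
    Measure.jordanDecompositionOfToSignedMeasureSub_negPart, Measure.add_apply,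
    sub_univ_eq hS, sub_univ_eq hS.compl, compl_compl,
    ENNReal.toReal_add (by finiteness) (by finiteness),
    ENNReal.toReal_sub_of_le h2 (by finiteness), ENNReal.toReal_sub_of_le h1 (by finiteness)]
  rfl

/-- If `C` is at most the distance between any pair of distinct points
of `supp(μ)` and `supp(ν)`, then `KR_{p,C}(μ,ν)^p = (C^p/2)·‖μ − ν‖_TV`. -/
theorem statement7 [CompleteSpace X] [TopologicalSpace.SeparableSpace X] [BorelSpace X]
    (p C : ℝ) (hp : 1 ≤ p) (hC : 0 < C)
    (μ ν : Measure X) [IsFiniteMeasure μ] [IsFiniteMeasure ν]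
    (hsep : ∀ x₁ ∈ msupport μ, ∀ x₂ ∈ msupport ν, x₂ ≠ x₁ → C ≤ dist x₁ x₂) :
    KR p C μ ν ^ p =
      C ^ p / 2 *
        ((μ.toSignedMeasure - ν.toSignedMeasure).totalVariation Set.univ).toReal := by
  have : SecondCountableTopology X := UniformSpace.secondCountable_of_separable X
  obtain ⟨S, hS⟩ := exists_isHahnDecomposition μ ν
  have hKR : KRpow p C μ ν =
      ENNReal.ofReal (C ^ p) * ((μ Set.univ + ν Set.univ) / 2 - (μ S + ν Sᶜ)) := by
    refine le_antisymm ?_ (le_iInf₂ fun π hπ =>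
      le_KRcost_of_isSubcoupling hp hC hsep hπ hS.measurableSet)
    obtain ⟨π, hπ, hle⟩ := exists_subcoupling_KRcost_le (C := C) hp hS
    exact (iInf₂_le π hπ).trans hle
  have h1 : μ S ≤ ν S := by simpa using hS.le_on Set.univ
  have h2 : ν Sᶜ ≤ μ Sᶜ := by simpa using hS.ge_on_compl Set.univ
  -- The truncated subtraction is a genuine one: the common part has mass at most `m_μ` and `m_ν`.
  have hle : μ S + ν Sᶜ ≤ (μ Set.univ + ν Set.univ) / 2 := by
    rw [ENNReal.le_div_iff_mul_le (by simp) (by simp), mul_two,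
      ← measure_add_measure_compl (μ := μ) hS.measurableSet,
      ← measure_add_measure_compl (μ := ν) hS.measurableSet]
    gcongr
  have hμ : μ.real Set.univ = μ.real S + μ.real Sᶜ :=
    (measureReal_add_measureReal_compl hS.measurableSet).symm
  have hν : ν.real Set.univ = ν.real S + ν.real Sᶜ :=
    (measureReal_add_measureReal_compl hS.measurableSet).symm
  rw [KR, ← Real.rpow_mul ENNReal.toReal_nonneg, one_div_mul_cancel (by linarith),
    Real.rpow_one, hKR, totalVariation_sub_toReal hS, ENNReal.toReal_mul,
    ENNReal.toReal_ofReal (by positivity),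
    ENNReal.toReal_sub_of_le hle (by finiteness), ENNReal.toReal_div,
    ENNReal.toReal_add (by finiteness) (by finiteness),
    ENNReal.toReal_add (by finiteness) (by finiteness)]
  simp only [← measureReal_def, hμ, hν, ENNReal.toReal_ofNat]
  ring
end
end

section
/- Let (X,d) be a complete separable metric space, let p ≥ 1, and let μ, ν be finite Borel measures on X with equal total mass m_μ = m_ν. If C ≥ d(x₁,x₂) for all x₁ ∈ supp(μ) and x₂ ∈ supp(ν), then KR_{p,C}(μ,ν)^p = W_p(μ,ν)^p; that is, for C at least the diameter of the supports the Kantorovich–Rubinstein distance coincides with the Wasserstein-p distance. -/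
/-!
A coupling is a sub-coupling of full mass, so `KRpow ≤ WpPow`. Conversely, a sub-coupling `π`
leaves residual measures `α = μ - π₁` and `β = ν - π₂` of a common mass `r = m - π(X × X)`.
If `r ≠ 0`, the measure `π + r⁻¹ • (α ⊗ β)` is a coupling of `(μ, ν)`, and since `α ≤ μ` and
`β ≤ ν` are concentrated on the supports of `μ` and `ν`, the added product term costs at most
`r⁻¹ * C ^ p * r ^ 2 = C ^ p * r`, which is exactly the penalty paid by `π`.
-/

open MeasureTheory ENNReal

noncomputable section

variable {X : Type*} [MetricSpace X] [MeasurableSpace X]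

/-- `W_p(μ,ν)^p`: the balanced optimal transport cost for the cost `d^p`, the infimum
over all couplings of `(μ, ν)` (measures on `X × X` with marginals exactly `μ` and `ν`). -/
def WpPow (p : ℝ) (μ ν : Measure X) : ℝ≥0∞ :=
  ⨅ (π : Measure (X × X)) (_ : π.map Prod.fst = μ ∧ π.map Prod.snd = ν),
    ∫⁻ z, ENNReal.ofReal (dist z.1 z.2 ^ p) ∂π

/-- The support is conull because the space is separable. -/
lemma ae_mem_msupport [TopologicalSpace.SeparableSpace X] (μ : Measure X) :
    ∀ᵐ x ∂μ, x ∈ msupport μ := by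
  have : SecondCountableTopology X := UniformSpace.secondCountable_of_separable X
  filter_upwards [Measure.support_mem_ae (μ := μ)] with x hx ε hε
  exact (Measure.mem_support_iff_forall x).1 hx _ (Metric.ball_mem_nhds x hε)

lemma KRpow_le_WpPow (p C : ℝ) (μ ν : Measure X) (hmass : μ Set.univ = ν Set.univ) :
    KRpow p C μ ν ≤ WpPow p μ ν := by
  refine le_iInf₂ fun π hπ => ?_
  obtain ⟨h1, h2⟩ := hπ
  have hsub : IsSubcoupling μ ν π := by
    refine ⟨fun A hA => ?_, fun B hB => ?_⟩
    · rw [← h1, Measure.map_apply measurable_fst hA, Set.prod_univ]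
    · rw [← h2, Measure.map_apply measurable_snd hB, Set.univ_prod]
  refine (iInf₂_le π hsub).trans ?_
  have hm : π Set.univ = μ Set.univ := by
    rw [← h1, Measure.map_apply measurable_fst MeasurableSet.univ, Set.preimage_univ]
  simp [KRcost, hm, ← hmass, ENNReal.add_div, ENNReal.add_halves]

/-- Couple the residual marginals of a sub-coupling independently. -/
lemma WpPow_le_KRcost [TopologicalSpace.SeparableSpace X]
    (p C : ℝ) (hp : 0 ≤ p)
    (μ ν : Measure X) [IsFiniteMeasure μ] [IsFiniteMeasure ν]
    (hmass : μ Set.univ = ν Set.univ)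
    (hdiam : ∀ x₁ ∈ msupport μ, ∀ x₂ ∈ msupport ν, dist x₁ x₂ ≤ C)
    (π : Measure (X × X)) (hπ : IsSubcoupling μ ν π) :
    WpPow p μ ν ≤ KRcost p C μ ν π := by
  have h1 : π.map Prod.fst ≤ μ := Measure.le_iff.2 fun A hA => by
    rw [Measure.map_apply measurable_fst hA, ← Set.prod_univ]; exact hπ.1 A hA
  have h2 : π.map Prod.snd ≤ ν := Measure.le_iff.2 fun B hB => by
    rw [Measure.map_apply measurable_snd hB, ← Set.univ_prod]; exact hπ.2 B hB
  have hu1 : π.map Prod.fst Set.univ = π Set.univ := by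
    rw [Measure.map_apply measurable_fst MeasurableSet.univ, Set.preimage_univ]
  have hu2 : π.map Prod.snd Set.univ = π Set.univ := by
    rw [Measure.map_apply measurable_snd MeasurableSet.univ, Set.preimage_univ]
  have : IsFiniteMeasure (π.map Prod.fst) := isFiniteMeasure_of_le μ h1
  have : IsFiniteMeasure (π.map Prod.snd) := isFiniteMeasure_of_le ν h2
  set α := μ - π.map Prod.fst with hα
  set β := ν - π.map Prod.snd with hβ
  set r := μ Set.univ - π Set.univ with hr
  have hαadd : π.map Prod.fst + α = μ := by
    rw [add_comm]; exact Measure.sub_add_cancel_of_le h1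
  have hβadd : π.map Prod.snd + β = ν := by
    rw [add_comm]; exact Measure.sub_add_cancel_of_le h2
  have hαr : α Set.univ = r := by
    rw [hα, Measure.sub_apply MeasurableSet.univ h1, hu1]
  have hβr : β Set.univ = r := by
    rw [hβ, Measure.sub_apply MeasurableSet.univ h2, hu2, ← hmass]
  have hαμ : α ≤ μ := Measure.sub_le
  have hβν : β ≤ ν := Measure.sub_le
  have hrtop : r ≠ ∞ := hαr ▸ measure_ne_top α _
  have hcost : KRcost p C μ ν π
      = (∫⁻ z, ENNReal.ofReal (dist z.1 z.2 ^ p) ∂π) + ENNReal.ofReal (C ^ p) * r := by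
    simp [KRcost, ← hmass, ENNReal.add_div, ENNReal.add_halves, hr]
  rw [hcost]
  by_cases hr0 : r = 0
  · have hα0 : α = 0 := Measure.measure_univ_eq_zero.1 (hαr.trans hr0)
    have hβ0 : β = 0 := Measure.measure_univ_eq_zero.1 (hβr.trans hr0)
    rw [hα0, add_zero] at hαadd
    rw [hβ0, add_zero] at hβadd
    exact (iInf₂_le π ⟨hαadd, hβadd⟩).trans le_self_add
  have hcancel : r⁻¹ * r = 1 := ENNReal.inv_mul_cancel hr0 hrtop
  have hfst : (π + r⁻¹ • α.prod β).map Prod.fst = μ := by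
    rw [Measure.map_add _ _ measurable_fst, Measure.map_smul, Measure.map_fst_prod, hβr,
      smul_smul, hcancel, one_smul, hαadd]
  have hsnd : (π + r⁻¹ • α.prod β).map Prod.snd = ν := by
    rw [Measure.map_add _ _ measurable_snd, Measure.map_smul, Measure.map_snd_prod, hαr,
      smul_smul, hcancel, one_smul, hβadd]
  refine (iInf₂_le (π + r⁻¹ • α.prod β) ⟨hfst, hsnd⟩).trans ?_
  rw [lintegral_add_measure, lintegral_smul_measure]
  gcongr
  have hae : ∀ᵐ z ∂(α.prod β),
      ENNReal.ofReal (dist z.1 z.2 ^ p) ≤ ENNReal.ofReal (C ^ p) := by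
    have e1 : ∀ᵐ x ∂α, x ∈ msupport μ := ae_mono hαμ (ae_mem_msupport μ)
    have e2 : ∀ᵐ x ∂β, x ∈ msupport ν := ae_mono hβν (ae_mem_msupport ν)
    filter_upwards [Measure.quasiMeasurePreserving_fst.ae e1,
      Measure.quasiMeasurePreserving_snd.ae e2] with z hz1 hz2
    exact ENNReal.ofReal_le_ofReal
      (Real.rpow_le_rpow dist_nonneg (hdiam _ hz1 _ hz2) hp)
  calc r⁻¹ • ∫⁻ z, ENNReal.ofReal (dist z.1 z.2 ^ p) ∂(α.prod β)
      ≤ r⁻¹ • ∫⁻ _, ENNReal.ofReal (C ^ p) ∂(α.prod β) := by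
        simp only [smul_eq_mul]
        exact mul_le_mul_right (lintegral_mono_ae hae) _
    _ = ENNReal.ofReal (C ^ p) * r := by
        rw [lintegral_const, ← Set.univ_prod_univ, Measure.prod_prod, hαr, hβr, smul_eq_mul]
        calc r⁻¹ * (ENNReal.ofReal (C ^ p) * (r * r))
            = (r⁻¹ * r) * (ENNReal.ofReal (C ^ p) * r) := by ring
          _ = _ := by rw [hcancel, one_mul]

/-- For measures of equal total mass and `C` at least the distance
between any point of `supp(μ)` and any point of `supp(ν)`, the Kantorovich–Rubinstein
distance coincides with the Wasserstein-`p` distance: `KR_{p,C}(μ,ν)^p = W_p(μ,ν)^p`. -/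
theorem statement8 [CompleteSpace X] [TopologicalSpace.SeparableSpace X] [BorelSpace X]
    (p C : ℝ) (hp : 1 ≤ p) (hC : 0 < C)
    (μ ν : Measure X) [IsFiniteMeasure μ] [IsFiniteMeasure ν]
    (hmass : μ Set.univ = ν Set.univ)
    (hdiam : ∀ x₁ ∈ msupport μ, ∀ x₂ ∈ msupport ν, dist x₁ x₂ ≤ C) :
    KR p C μ ν ^ p = (WpPow p μ ν).toReal := by
  have hpow : KRpow p C μ ν = WpPow p μ ν :=
    le_antisymm (KRpow_le_WpPow p C μ ν hmass)
      (le_iInf₂ fun π hπ => WpPow_le_KRcost p C (by linarith) μ ν hmass hdiam π hπ)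
  rw [KR, hpow, ← Real.rpow_mul ENNReal.toReal_nonneg, one_div,
    inv_mul_cancel₀ (by linarith), Real.rpow_one]
end
end

section
/- Let α > 0 and β ≥ 0. Then there exist constants c > 0 and T ≥ e such that for every real t ≥ T, for every C > 0, and for any two independent random variables N and M each Poisson distributed with mean t, one has E[ min( C, (max(N,M)+1)^{−α}·(log(max(N,M)+2))^{−β} ) ] ≥ c·min( C, t^{−α}·(log t)^{−β} ). -/
open MeasureTheory ProbabilityTheory

/-!
By a first-moment bound, `max(N, M) ≤ 4t` holds with probability at least `1/2`, because
`E[N + M] = 2t`. On that event the decreasing function `(x+1)^{-α} (log (x+2))^{-β}` at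
`x = max(N, M)` is at least `5^{-α} 3^{-β}` times `t^{-α} (log t)^{-β}` for `t ≥ e`, since
`4t + 1 ≤ 5t` and `log (4t + 2) ≤ 3 log t`; this is `weight_lower_bound`.

Markov's inequality is used in integrated form: the integrand is bounded below pointwise by
`5^{-α} 3^{-β} · min(C, t^{-α}(log t)^{-β}) · (1 - (N + M)/(4t))`, which is nonpositive off the
good event, and whose expectation follows from the Poisson mean (`poisson_mean`).
-/

lemma hasSum_poisson_mean (t : ℝ) :
    HasSum (fun n : ℕ => Real.exp (-t) * t ^ n / (Nat.factorial n : ℝ) * (n : ℝ)) t := by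
  rw [← hasSum_nat_add_iff' 1]
  have h : HasSum (fun n : ℕ => t ^ n / (Nat.factorial n : ℝ)) (Real.exp t) := by
    rw [Real.exp_eq_exp_ℝ]
    exact NormedSpace.expSeries_div_hasSum_exp t
  have h2 := h.mul_left (t * Real.exp (-t))
  have e : t * Real.exp (-t) * Real.exp t = t := by
    rw [mul_assoc, ← Real.exp_add]; simp
  rw [e] at h2
  convert! h2 using 1
  · funext n
    have h1 : ((n : ℝ) + 1) ≠ 0 := by positivity
    have h3 : (Nat.factorial n : ℝ) ≠ 0 := by positivity
    rw [Nat.factorial_succ]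
    push_cast
    field_simp
    ring
  · simp

/-- A random variable with the Poisson(`t`) mass function is integrable with mean `t`. -/
lemma poisson_mean {Ω : Type} [MeasurableSpace Ω] (P : Measure Ω)
    (t : ℝ) (ht : 0 ≤ t) (N : Ω → ℕ) (hN : Measurable N)
    (h : ∀ k : ℕ, P {ω | N ω = k} =
      ENNReal.ofReal (Real.exp (-t) * t ^ k / (Nat.factorial k : ℝ))) :
    Integrable (fun ω => (N ω : ℝ)) P ∧ ∫ ω, (N ω : ℝ) ∂P = t := by
  lift t to NNReal using ht
  have hmap : P.map N = poissonMeasure t := by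
    refine Measure.ext_of_singleton fun k => ?_
    rw [Measure.map_apply hN (measurableSet_singleton k), poissonMeasure_singleton, ← h k]
    rfl
  have hs := hasSum_poisson_mean (t : ℝ)
  have hint : Integrable (fun n : ℕ => (n : ℝ)) (poissonMeasure t) := by
    rw [integrable_poissonMeasure_iff]
    simpa using hs.summable
  constructor
  · rw [← hmap] at hint
    exact hint.comp_measurable hN
  · have h1 := integral_map (μ := P) hN.aemeasurable
      (f := fun n : ℕ => (n : ℝ)) (Measurable.of_discrete.aestronglyMeasurable)
    rw [← h1, hmap, integral_poissonMeasure]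
    simpa using hs.tsum_eq

lemma weight_lower_bound (α β t x : ℝ) (hα : 0 < α) (hβ : 0 ≤ β) (ht : Real.exp 1 ≤ t)
    (hx : 0 ≤ x) (hxt : x ≤ 4 * t) :
    5 ^ (-α) * 3 ^ (-β) * (t ^ (-α) * Real.log t ^ (-β)) ≤
      (x + 1) ^ (-α) * Real.log (x + 2) ^ (-β) := by
  have he : (2.7 : ℝ) < Real.exp 1 := by linarith [Real.exp_one_gt_d9]
  have ht0 : 0 < t := by linarith
  have hl : 1 ≤ Real.log t := (Real.le_log_iff_exp_le ht0).2 ht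
  have hlog : Real.log (x + 2) ≤ 3 * Real.log t := by
    have h3 : 3 * Real.log t = Real.log (t ^ 3) := by rw [Real.log_pow]; norm_num
    rw [h3]
    apply Real.log_le_log (by linarith)
    have h27 : 2.7 ≤ t := by linarith
    nlinarith [mul_nonneg ht0.le (show 0 ≤ t ^ 2 - 2.7 ^ 2 by nlinarith)]
  have hlp : 0 < Real.log (x + 2) := Real.log_pos (by linarith)
  calc 5 ^ (-α) * 3 ^ (-β) * (t ^ (-α) * Real.log t ^ (-β))
      = (5 * t) ^ (-α) * (3 * Real.log t) ^ (-β) := by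
        rw [Real.mul_rpow (by norm_num) ht0.le, Real.mul_rpow (by norm_num) (by linarith)]
        ring
    _ ≤ _ := by
        apply mul_le_mul
        · exact Real.rpow_le_rpow_of_nonpos (by linarith) (by linarith) (by linarith)
        · exact Real.rpow_le_rpow_of_nonpos hlp hlog (by linarith)
        · exact Real.rpow_nonneg (by linarith) _
        · exact Real.rpow_nonneg (by linarith) _

/-- For `α > 0` and `β ≥ 0` there are constants `c > 0` and `T ≥ e`
such that for all `t ≥ T`, all `C > 0`, and any two independent Poisson(`t`) random
variables `N, M`,
`E[min(C, (max(N,M)+1)^{−α}·(log(max(N,M)+2))^{−β})] ≥ c·min(C, t^{−α}·(log t)^{−β})`. -/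
theorem statement19 (α β : ℝ) (hα : 0 < α) (hβ : 0 ≤ β) :
    ∃ c : ℝ, 0 < c ∧ ∃ T : ℝ, Real.exp 1 ≤ T ∧
      ∀ t : ℝ, T ≤ t → ∀ C : ℝ, 0 < C →
      ∀ (Ω : Type) [MeasurableSpace Ω],
      ∀ P : Measure Ω, IsProbabilityMeasure P →
      ∀ N M : Ω → ℕ, Measurable N → Measurable M →
        (∀ k : ℕ, P {ω | N ω = k} =
          ENNReal.ofReal (Real.exp (-t) * t ^ k / (Nat.factorial k : ℝ))) →
        (∀ k : ℕ, P {ω | M ω = k} =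
          ENNReal.ofReal (Real.exp (-t) * t ^ k / (Nat.factorial k : ℝ))) →
        IndepFun N M P →
        c * min C (t ^ (-α) * Real.log t ^ (-β)) ≤
          ∫ ω, min C
            ((((max (N ω) (M ω) : ℕ) : ℝ) + 1) ^ (-α) *
              Real.log (((max (N ω) (M ω) : ℕ) : ℝ) + 2) ^ (-β)) ∂P := by
  refine ⟨5 ^ (-α) * 3 ^ (-β) / 2, by positivity, Real.exp 1, le_rfl, ?_⟩
  intro t ht C hC Ω _ P hP N M hN hM hNd hMd _
  have he : 0 < Real.exp 1 := Real.exp_pos 1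
  have ht0 : 0 < t := by linarith
  obtain ⟨hNi, hNe⟩ := poisson_mean P t ht0.le N hN hNd
  obtain ⟨hMi, hMe⟩ := poisson_mean P t ht0.le M hM hMd
  set c₀ : ℝ := 5 ^ (-α) * 3 ^ (-β) with hc₀
  have hc₀pos : 0 < c₀ := by positivity
  have hc₀le : c₀ ≤ 1 :=
    mul_le_one₀ (Real.rpow_le_one_of_one_le_of_nonpos (by norm_num) (by linarith))
      (by positivity) (Real.rpow_le_one_of_one_le_of_nonpos (by norm_num) (by linarith))
  set A : ℝ := t ^ (-α) * Real.log t ^ (-β) with hA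
  have hl : 1 ≤ Real.log t := (Real.le_log_iff_exp_le ht0).2 ht
  have hApos : 0 < A :=
    mul_pos (Real.rpow_pos_of_pos ht0 _) (Real.rpow_pos_of_pos (by linarith) _)
  have hm : 0 < min C A := lt_min hC hApos
  let g : ℕ → ℝ := fun n => min C (((n : ℝ) + 1) ^ (-α) * Real.log ((n : ℝ) + 2) ^ (-β))
  have hg0 : ∀ n, 0 ≤ g n := fun n =>
    le_min hC.le (mul_nonneg (Real.rpow_nonneg (by positivity) _)
      (Real.rpow_nonneg (Real.log_nonneg (by linarith [n.cast_nonneg (α := ℝ)])) _))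
  have hgi : Integrable (fun ω => g (max (N ω) (M ω))) P := by
    refine Integrable.of_bound (C := C)
      ((Measurable.of_discrete (f := g)).comp (hN.max hM)).aestronglyMeasurable ?_
    refine Filter.Eventually.of_forall fun ω => ?_
    rw [Real.norm_of_nonneg (hg0 _)]
    exact min_le_left _ _
  have hli : Integrable (fun ω => c₀ * min C A * (1 - ((N ω : ℝ) + M ω) / (4 * t))) P :=
    ((integrable_const _).sub ((hNi.add hMi).div_const _)).const_mul _
  have hle : ∀ ω, c₀ * min C A * (1 - ((N ω : ℝ) + M ω) / (4 * t)) ≤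
      g (max (N ω) (M ω)) := by
    intro ω
    have hN0 : (0 : ℝ) ≤ N ω := Nat.cast_nonneg _
    have hM0 : (0 : ℝ) ≤ M ω := Nat.cast_nonneg _
    have hfrac : 0 ≤ ((N ω : ℝ) + M ω) / (4 * t) := by positivity
    rcases le_total ((N ω : ℝ) + M ω) (4 * t) with h | h
    · have hx : ((max (N ω) (M ω) : ℕ) : ℝ) ≤ 4 * t := by
        rw [Nat.cast_max]
        exact max_le (by linarith) (by linarith)
      calc c₀ * min C A * (1 - ((N ω : ℝ) + M ω) / (4 * t)) ≤ c₀ * min C A :=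
            mul_le_of_le_one_right (by positivity) (by linarith)
        _ ≤ g (max (N ω) (M ω)) := by
            refine le_min ?_ ?_
            · calc c₀ * min C A ≤ 1 * C :=
                    mul_le_mul hc₀le (min_le_left _ _) hm.le zero_le_one
                _ = C := one_mul C
            · exact (mul_le_mul_of_nonneg_left (min_le_right _ _) hc₀pos.le).trans
                (weight_lower_bound α β t _ hα hβ ht (Nat.cast_nonneg _) hx)
    · have h1 : 1 ≤ ((N ω : ℝ) + M ω) / (4 * t) := by
        rwa [le_div_iff₀ (by positivity), one_mul]
      exact (mul_nonpos_of_nonneg_of_nonpos (by positivity) (by linarith)).trans (hg0 _)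
  have hdiv : Integrable (fun ω => ((N ω : ℝ) + M ω) / (4 * t)) P := (hNi.add hMi).div_const _
  have hval : ∫ ω, c₀ * min C A * (1 - ((N ω : ℝ) + M ω) / (4 * t)) ∂P =
      c₀ / 2 * min C A := by
    rw [integral_const_mul, integral_sub (integrable_const _) hdiv,
      integral_div, integral_add hNi hMi, hNe, hMe]
    simp only [integral_const, probReal_univ, one_smul]
    field_simp
    ring
  rw [← hval]
  exact integral_mono hli hgi hle
end
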